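/- For every a ∈ A, every compactly supported smooth function f ∈ C_c^∞(ℝ², ℂ), and every z ∈ ℝ²: ∫_{ℝ²} (id_A ⊗ I)(G_{a,f}(z,w)) dw = I(a)·(∫_{ℝ²} f)·1_A, and for every w ∈ ℝ²: ∫_{ℝ²} (I ⊗ id_A)(G_{a,f}(z,w)) dz = I(a)·(∫_{ℝ²} f)·1_A. In other words, the linear functional I_E(a⊗f) := I(a)·∫_{ℝ²} f is a two-sided invariant integral on the quantum Poincaré group E_q(1,1) at roots of unity, whose coproduct on A⊗C_c^∞(ℝ²) is given by (z,w) ↦ G_{a,f}(z,w). -/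

import Mathlib

open scoped TensorProduct

noncomputable section

/-- `q = exp(2πi/p)`, a primitive `p`-th root of unity. -/
def q (p : ℕ) : ℂ := Complex.exp (2 * Real.pi * Complex.I / p)

/-- `q^{1/2} = exp(iπ/p)`. -/
def qh (p : ℕ) : ℂ := Complex.exp (Real.pi * Complex.I / p)

/-- The balanced q-number `[k] = (q^k - q^{-k})/(q - q^{-1})`. -/
def qnum (p k : ℕ) : ℂ := (q p ^ k - (q p)⁻¹ ^ k) / (q p - (q p)⁻¹)

/-- The balanced q-factorial `[k]! = [1][2]⋯[k]`, with `[0]! = 1`. -/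
def qfact (p k : ℕ) : ℂ := ∏ j ∈ Finset.range k, qnum p (j + 1)

/-- Generators `η₊, η₋, δ` of the coordinate algebra of `E(1,1|p)`. -/
inductive Gen : Type
  | ep : Gen
  | em : Gen
  | d : Gen

open FreeAlgebra in
/-- The defining relations of `A(E(1,1|p))`: the two-sided ideal generated by
`η₋η₊ − q²η₊η₋`, `η₊δ − q²δη₊`, `η₋δ − q²δη₋`, `δ^p − 1`, `η₊^p`, `η₋^p`. -/
inductive ERel (p : ℕ) : FreeAlgebra ℂ Gen → FreeAlgebra ℂ Gen → Prop
  | commEta : ERel p (ι ℂ Gen.em * ι ℂ Gen.ep) ((q p ^ 2) • (ι ℂ Gen.ep * ι ℂ Gen.em))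
  | commEpD : ERel p (ι ℂ Gen.ep * ι ℂ Gen.d) ((q p ^ 2) • (ι ℂ Gen.d * ι ℂ Gen.ep))
  | commEmD : ERel p (ι ℂ Gen.em * ι ℂ Gen.d) ((q p ^ 2) • (ι ℂ Gen.d * ι ℂ Gen.em))
  | deltaPow : ERel p (ι ℂ Gen.d ^ p) 1
  | epPow : ERel p (ι ℂ Gen.ep ^ p) 0
  | emPow : ERel p (ι ℂ Gen.em ^ p) 0

/-- The coordinate algebra `A = A(E(1,1|p))` of the reduced quantum Poincaré group. -/
abbrev A (p : ℕ) : Type := RingQuot (ERel p)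

/-- `η₊ ∈ A`. -/
def ηp (p : ℕ) : A p := RingQuot.mkAlgHom ℂ (ERel p) (FreeAlgebra.ι ℂ Gen.ep)

/-- `η₋ ∈ A`. -/
def ηm (p : ℕ) : A p := RingQuot.mkAlgHom ℂ (ERel p) (FreeAlgebra.ι ℂ Gen.em)

/-- `δ ∈ A`. -/
def dl (p : ℕ) : A p := RingQuot.mkAlgHom ℂ (ERel p) (FreeAlgebra.ι ℂ Gen.d)

/-- `B₊ = (−1)^{(p+1)/2} Σ_{n=1}^{p−1} (q^{n²}/([p−n]![n]!)) η₊^{p−n} δ^n ⊗ η₊^n`. -/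
def Bplus (p : ℕ) : A p ⊗[ℂ] A p :=
  (-1 : ℂ) ^ ((p + 1) / 2) •
    ∑ n ∈ Finset.Icc 1 (p - 1),
      (q p ^ (n ^ 2) / (qfact p (p - n) * qfact p n)) •
        ((ηp p ^ (p - n) * dl p ^ n) ⊗ₜ[ℂ] ηp p ^ n)

/-- `B₋ = (−1)^{(p+1)/2} Σ_{n=1}^{p−1} (q^{−n²}/([p−n]![n]!)) η₋^{p−n} δ^{−n} ⊗ η₋^n`,
where `δ^{−1} = δ^{p−1}`. -/
def Bminus (p : ℕ) : A p ⊗[ℂ] A p :=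
  (-1 : ℂ) ^ ((p + 1) / 2) •
    ∑ n ∈ Finset.Icc 1 (p - 1),
      ((q p)⁻¹ ^ (n ^ 2) / (qfact p (p - n) * qfact p n)) •
        ((ηm p ^ (p - n) * (dl p ^ (p - 1)) ^ n) ⊗ₜ[ℂ] ηm p ^ n)

/-! The functional `I` picks out the top monomial `η₊^{p-1} η₋^{p-1}`. By the `q`-binomial theorem
`Δ (η₊^n η₋^m δ^k)` is a combination of tensors `η₊^i η₋^j δ^* ⊗ η₊^{i'} η₋^{j'} δ^k` with
`i + i' = n` and `j + j' = m`, so `I` applied to one leg kills every term except the one in which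
that leg carries all of `η₊^n η₋^m`; this is the invariance of `I` on `A`. The integral over `ℝ²` of
any derivative of a test function vanishes, so the terms of `G_{a,f}` containing `B₊` and `B₋`
contribute nothing, and the translation invariance of Lebesgue measure does the rest. -/

open Finset.HasAntidiagonal (antidiagonal mem_antidiagonal)

section QBinomial

variable {K R : Type*}

/-- The Gaussian binomial coefficient `[n choose k]` with parameter `r`, defined by a `q`-Pascal
recursion so that it makes sense for every `r` (roots of unity included) without division. -/
def gaussBinom [CommSemiring K] (r : K) : ℕ → ℕ → K
  | _, 0 => 1
  | 0, _ + 1 => 0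
  | n + 1, k + 1 => gaussBinom r n k + r ^ (k + 1) * gaussBinom r n (k + 1)

section GaussBinom

variable [CommSemiring K] (r : K)

@[simp]
theorem gaussBinom_zero_right (n : ℕ) : gaussBinom r n 0 = 1 := by
  cases n <;> rfl

theorem gaussBinom_eq_zero_of_lt {n k : ℕ} (h : n < k) : gaussBinom r n k = 0 := by
  induction n generalizing k with
  | zero => obtain ⟨k, rfl⟩ := Nat.exists_eq_succ_of_ne_zero h.ne'; rfl
  | succ n ih =>
    obtain ⟨k, rfl⟩ := Nat.exists_eq_succ_of_ne_zero (Nat.ne_zero_of_lt h)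
    simp [gaussBinom, ih (Nat.lt_of_succ_lt_succ h), ih (Nat.lt_of_succ_lt h)]

@[simp]
theorem gaussBinom_self (n : ℕ) : gaussBinom r n n = 1 := by
  induction n with
  | zero => rfl
  | succ n ih => simp [gaussBinom, ih, gaussBinom_eq_zero_of_lt r n.lt_succ_self]

end GaussBinom

/-- The elements `x` and `y` commute up to the scalar `r`, which is picked up in moving `x` to the
right past `y`. -/
def QCommute [CommSemiring K] [Semiring R] [Algebra K R] (r : K) (x y : R) : Prop :=
  x * y = r • (y * x)

namespace QCommute

section CommSemiring

variable [CommSemiring K] [Semiring R] [Algebra K R] {r s : K} {x y z : R}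

theorem mul_left (hx : QCommute r x z) (hy : QCommute s y z) : QCommute (r * s) (x * y) z := by
  rw [QCommute, mul_assoc, hy, mul_smul_comm, ← mul_assoc, hx, smul_mul_assoc, smul_smul,
    mul_comm s, mul_assoc]

theorem mul_right (hy : QCommute r x y) (hz : QCommute s x z) : QCommute (r * s) x (y * z) := by
  rw [QCommute, ← mul_assoc, hy, smul_mul_assoc, mul_assoc, hz, mul_smul_comm, smul_smul,
    mul_assoc]

theorem pow_left (h : QCommute r x y) (m : ℕ) : QCommute (r ^ m) (x ^ m) y := by
  induction m with
  | zero => simp [QCommute]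
  | succ m ih => simpa only [pow_succ] using ih.mul_left h

theorem pow_right (h : QCommute r x y) (n : ℕ) : QCommute (r ^ n) x (y ^ n) := by
  induction n with
  | zero => simp [QCommute]
  | succ n ih => simpa only [pow_succ] using ih.mul_right h

theorem tmul_tmul_one {S : Type*} [Semiring S] [Algebra K S] (h : QCommute r x y) (s : S) :
    QCommute r (x ⊗ₜ[K] s) (y ⊗ₜ[K] (1 : S)) := by
  rw [QCommute, Algebra.TensorProduct.tmul_mul_tmul, Algebra.TensorProduct.tmul_mul_tmul, h,
    mul_one, one_mul, TensorProduct.smul_tmul']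

theorem add_pow (h : QCommute r y x) (n : ℕ) :
    (x + y) ^ n =
      ∑ ij ∈ antidiagonal n, gaussBinom r n ij.2 • (x ^ ij.1 * y ^ ij.2) := by
  induction n with
  | zero => simp
  | succ n ih =>
    let F : ℕ × ℕ → R := fun ij => (r ^ ij.2 * gaussBinom r n ij.2) • (x ^ ij.1 * y ^ ij.2)
    have mul_x : (x + y) ^ n * x = ∑ ij ∈ antidiagonal (n + 1), F ij := by
      rw [Finset.Nat.sum_antidiagonal_succ, ih, Finset.sum_mul]
      simp only [F, gaussBinom_eq_zero_of_lt r n.lt_succ_self, mul_zero, zero_smul, zero_add]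
      refine Finset.sum_congr rfl fun ij _ => ?_
      rw [smul_mul_assoc, mul_assoc, h.pow_left, mul_smul_comm, smul_smul,
        mul_comm (gaussBinom _ _ _), ← mul_assoc, ← pow_succ]
    have mul_y : (x + y) ^ n * y =
        ∑ ij ∈ antidiagonal n, gaussBinom r n ij.2 • (x ^ ij.1 * y ^ (ij.2 + 1)) := by
      simp only [ih, Finset.sum_mul, smul_mul_assoc, mul_assoc, pow_succ]
    rw [pow_succ, mul_add, mul_x, mul_y, Finset.Nat.sum_antidiagonal_succ',
      Finset.Nat.sum_antidiagonal_succ', add_assoc, ← Finset.sum_add_distrib]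
    simp only [F, gaussBinom, ← add_smul, pow_zero, one_mul, gaussBinom_zero_right,
      add_comm (gaussBinom r n _)]

end CommSemiring

theorem symm [Field K] [Semiring R] [Algebra K R] {r : K} {x y : R} (hr : r ≠ 0)
    (h : QCommute r x y) : QCommute r⁻¹ y x := by
  rw [QCommute, h, inv_smul_smul₀ hr]

end QCommute

end QBinomial

theorem eq_top_of_adjoin_eq_top {K R : Type*} [CommSemiring K] [Semiring R] [Algebra K R]
    {s : Set R} (hs : Algebra.adjoin K s = ⊤) {M : Submodule K R} (one_mem : 1 ∈ M)
    (mul_mem : ∀ g ∈ s, ∀ x ∈ M, g * x ∈ M) : M = ⊤ := by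
  refine Submodule.eq_top_iff'.2 fun a => ?_
  have mul_mem_of_adjoin : ∀ x ∈ M, a * x ∈ M := by
    induction (hs ▸ Algebra.mem_top : a ∈ Algebra.adjoin K s) using Algebra.adjoin_induction with
    | mem g hg => exact mul_mem g hg
    | algebraMap r => exact fun x hx => (Algebra.smul_def r x).symm ▸ M.smul_mem r hx
    | add b c _ _ hb hc => exact fun x hx => (add_mul b c x).symm ▸ M.add_mem (hb x hx) (hc x hx)
    | mul b c _ _ hb hc => exact fun x hx => (mul_assoc b c x).symm ▸ hb _ (hc x hx)
  simpa using mul_mem_of_adjoin 1 one_mem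

section CoordinateAlgebra

variable (p : ℕ)

theorem q_ne_zero : q p ≠ 0 := Complex.exp_ne_zero _

theorem qCommute_ηm_ηp : QCommute (q p ^ 2) (ηm p) (ηp p) := by
  simpa [QCommute, ηm, ηp] using RingQuot.mkAlgHom_rel ℂ (ERel.commEta (p := p))

theorem qCommute_dl_ηp : QCommute (q p ^ 2)⁻¹ (dl p) (ηp p) := by
  refine QCommute.symm (pow_ne_zero 2 (q_ne_zero p)) ?_
  simpa [QCommute, dl, ηp] using RingQuot.mkAlgHom_rel ℂ (ERel.commEpD (p := p))

theorem qCommute_dl_ηm : QCommute (q p ^ 2)⁻¹ (dl p) (ηm p) := by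
  refine QCommute.symm (pow_ne_zero 2 (q_ne_zero p)) ?_
  simpa [QCommute, dl, ηm] using RingQuot.mkAlgHom_rel ℂ (ERel.commEmD (p := p))

theorem dl_pow_self : dl p ^ p = 1 := by
  simpa [dl] using RingQuot.mkAlgHom_rel ℂ (ERel.deltaPow (p := p))

theorem ηp_pow_self : ηp p ^ p = 0 := by
  simpa [ηp] using RingQuot.mkAlgHom_rel ℂ (ERel.epPow (p := p))

theorem ηm_pow_self : ηm p ^ p = 0 := by
  simpa [ηm] using RingQuot.mkAlgHom_rel ℂ (ERel.emPow (p := p))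

theorem adjoin_generators : Algebra.adjoin ℂ {ηp p, ηm p, dl p} = ⊤ := by
  rw [← (AlgHom.range_eq_top _).2 (RingQuot.mkAlgHom_surjective ℂ (ERel p)), ← Algebra.map_top,
    ← FreeAlgebra.adjoin_range_ι, AlgHom.map_adjoin]
  congr 1
  ext x
  constructor
  · rintro (rfl | rfl | rfl)
    exacts [⟨_, ⟨.ep, rfl⟩, rfl⟩, ⟨_, ⟨.em, rfl⟩, rfl⟩, ⟨_, ⟨.d, rfl⟩, rfl⟩]
  · rintro ⟨_, ⟨_ | _ | _, rfl⟩, rfl⟩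
    exacts [.inl rfl, .inr (.inl rfl), .inr (.inr rfl)]

/-- The monomial `η₊^n η₋^m δ^k`; those with `n, m, k < p` are the basis
monomials on which the invariant functional is prescribed. -/
def monom (n m k : ℕ) : A p := ηp p ^ n * ηm p ^ m * dl p ^ k

theorem monom_mod (n m k : ℕ) : monom p n m (k % p) = monom p n m k := by
  rw [monom, monom, ← pow_eq_pow_mod k (dl_pow_self p)]

variable {p} in
theorem monom_eq_zero {n m : ℕ} (h : p ≤ n ∨ p ≤ m) (k : ℕ) : monom p n m k = 0 := by
  rcases h with hn | hm
  · simp [monom, pow_eq_zero_of_le hn (ηp_pow_self p)]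
  · simp [monom, pow_eq_zero_of_le hm (ηm_pow_self p)]

theorem ηp_mul_monom (n m k : ℕ) : ηp p * monom p n m k = monom p (n + 1) m k := by
  simp only [monom, pow_succ', mul_assoc]

theorem ηm_mul_monom (n m k : ℕ) :
    ηm p * monom p n m k = (q p ^ 2) ^ n • monom p n (m + 1) k := by
  rw [monom, ← mul_assoc, ← mul_assoc, (qCommute_ηm_ηp p).pow_right n]
  simp only [monom, smul_mul_assoc, pow_succ', mul_assoc]

theorem dl_mul_monom (n m k : ℕ) :
    dl p * monom p n m k =
      ((q p ^ 2)⁻¹ ^ n * (q p ^ 2)⁻¹ ^ m) • monom p n m (k + 1) := by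
  rw [monom, ← mul_assoc,
    ((qCommute_dl_ηp p).pow_right n).mul_right ((qCommute_dl_ηm p).pow_right m)]
  simp only [monom, smul_mul_assoc, pow_succ', mul_assoc]

theorem span_monom :
    Submodule.span ℂ (Set.range fun t : ℕ × ℕ × ℕ => monom p t.1 t.2.1 t.2.2) = ⊤ := by
  set S := Submodule.span ℂ (Set.range fun t : ℕ × ℕ × ℕ => monom p t.1 t.2.1 t.2.2)
  have monom_mem (n m k : ℕ) : monom p n m k ∈ S := Submodule.subset_span ⟨(n, m, k), rfl⟩
  refine eq_top_of_adjoin_eq_top (adjoin_generators p)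
    (by simpa [monom] using monom_mem 0 0 0) fun g hg => ?_
  suffices S ≤ S.comap (LinearMap.mulLeft ℂ g) from this
  refine Submodule.span_le.2 ?_
  rintro _ ⟨⟨n, m, k⟩, rfl⟩
  change g * monom p n m k ∈ S
  rcases hg with rfl | rfl | rfl
  · rw [ηp_mul_monom]
    exact monom_mem _ _ _
  · rw [ηm_mul_monom]
    exact S.smul_mem _ (monom_mem _ _ _)
  · rw [dl_mul_monom]
    exact S.smul_mem _ (monom_mem _ _ _)

variable {p} in
theorem linearMap_ext_monom {M : Type*} [AddCommMonoid M] [Module ℂ M] {F G : A p →ₗ[ℂ] M}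
    (h : ∀ n m k, n < p → m < p → k < p → F (monom p n m k) = G (monom p n m k)) : F = G := by
  refine LinearMap.ext_on_range (span_monom p) fun ⟨n, m, k⟩ => ?_
  change F (monom p n m k) = G (monom p n m k)
  by_cases hnm : p ≤ n ∨ p ≤ m
  · simp only [monom_eq_zero hnm, map_zero]
  · rw [not_or, not_le, not_le] at hnm
    rw [← monom_mod]
    exact h n m _ hnm.1 hnm.2 (Nat.mod_lt k (Nat.zero_lt_of_lt hnm.1))

end CoordinateAlgebra

section InvariantFunctional

/-- Right invariance of a functional `I` with respect to a map `Δ : H → H ⊗ H`: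
`(id ⊗ I) ∘ Δ = I(·) 1`. -/
def IsRightInvariant {K H : Type*} [CommSemiring K] [Semiring H] [Algebra K H]
    (Δ : H → H ⊗[K] H) (I : H →ₗ[K] K) : Prop :=
  ∀ a, TensorProduct.rid K H (TensorProduct.map LinearMap.id I (Δ a)) = I a • 1

/-- Left invariance of a functional `I` with respect to a map `Δ : H → H ⊗ H`:
`(I ⊗ id) ∘ Δ = I(·) 1`. -/
def IsLeftInvariant {K H : Type*} [CommSemiring K] [Semiring H] [Algebra K H]
    (Δ : H → H ⊗[K] H) (I : H →ₗ[K] K) : Prop :=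
  ∀ a, TensorProduct.lid K H (TensorProduct.map I LinearMap.id (Δ a)) = I a • 1

variable {p : ℕ}

/-- The algebra map `Δ` is the coproduct of `E(1,1|p)`: it has the prescribed values on `η₊`, `η₋`
and `δ`, with `δ⁻¹` written as `δ^{p-1}`. -/
structure IsCoproduct (Δ : A p →ₐ[ℂ] A p ⊗[ℂ] A p) : Prop where
  map_ηp : Δ (ηp p) = ηp p ⊗ₜ[ℂ] 1 + dl p ⊗ₜ[ℂ] ηp p
  map_ηm : Δ (ηm p) = ηm p ⊗ₜ[ℂ] 1 + (dl p ^ (p - 1)) ⊗ₜ[ℂ] ηm p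
  map_dl : Δ (dl p) = dl p ⊗ₜ[ℂ] dl p

/-- The functional `I` is `c` times the coefficient of the top monomial `η₊^{p-1} η₋^{p-1}`. -/
def IsTopCoefficient (c : ℂ) (I : A p →ₗ[ℂ] ℂ) : Prop :=
  ∀ n m k : ℕ, n < p → m < p → k < p →
    I (monom p n m k) = if n = p - 1 ∧ m = p - 1 ∧ k = 0 then c else 0

variable {Δ : A p →ₐ[ℂ] A p ⊗[ℂ] A p} {I : A p →ₗ[ℂ] ℂ} {c : ℂ}

theorem IsTopCoefficient.apply_monom_eq_zero (hI : IsTopCoefficient c I) {n m : ℕ}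
    (h : ¬(n = p - 1 ∧ m = p - 1)) (k : ℕ) : I (monom p n m k) = 0 := by
  by_cases hnm : p ≤ n ∨ p ≤ m
  · rw [monom_eq_zero hnm, map_zero]
  · rw [not_or, not_le, not_le] at hnm
    rw [← monom_mod, hI n m _ hnm.1 hnm.2 (Nat.mod_lt k (Nat.zero_lt_of_lt hnm.1)),
      if_neg fun h' => h ⟨h'.1, h'.2.1⟩]

/-- The coefficients of `IsCoproduct.map_monom`: the first two factors come from expanding the
powers of `Δ η₊` and `Δ η₋`, the last one from moving `δ^{i'}` past `η₋^j` in the first leg. -/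
def coproductCoeff (p n m i' j j' : ℕ) : ℂ :=
  gaussBinom (q p ^ 2)⁻¹ n i' * gaussBinom ((q p ^ 2)⁻¹ ^ (p - 1)) m j' * ((q p ^ 2)⁻¹ ^ i') ^ j

namespace IsCoproduct

theorem map_ηp_pow (hΔ : IsCoproduct Δ) (n : ℕ) :
    Δ (ηp p ^ n) = ∑ t ∈ antidiagonal n, gaussBinom (q p ^ 2)⁻¹ n t.2 •
      ((ηp p ^ t.1 * dl p ^ t.2) ⊗ₜ[ℂ] (ηp p ^ t.2)) := by
  simp only [map_pow, hΔ.map_ηp, ((qCommute_dl_ηp p).tmul_tmul_one (ηp p)).add_pow,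
    Algebra.TensorProduct.tmul_pow, Algebra.TensorProduct.tmul_mul_tmul, one_pow, one_mul]

theorem map_ηm_pow (hΔ : IsCoproduct Δ) (m : ℕ) :
    Δ (ηm p ^ m) = ∑ t ∈ antidiagonal m, gaussBinom ((q p ^ 2)⁻¹ ^ (p - 1)) m t.2 •
      ((ηm p ^ t.1 * dl p ^ ((p - 1) * t.2)) ⊗ₜ[ℂ] (ηm p ^ t.2)) := by
  simp only [map_pow, hΔ.map_ηm,
    (((qCommute_dl_ηm p).pow_left (p - 1)).tmul_tmul_one (ηm p)).add_pow,
    Algebra.TensorProduct.tmul_pow, Algebra.TensorProduct.tmul_mul_tmul, one_pow, one_mul, pow_mul]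

theorem map_monom (hΔ : IsCoproduct Δ) (n m k : ℕ) :
    Δ (monom p n m k) =
      ∑ t ∈ antidiagonal n ×ˢ antidiagonal m,
        coproductCoeff p n m t.1.2 t.2.1 t.2.2 •
          (monom p t.1.1 t.2.1 (t.1.2 + (p - 1) * t.2.2 + k) ⊗ₜ[ℂ] monom p t.1.2 t.2.2 k) := by
  rw [monom, map_mul, map_mul, hΔ.map_ηp_pow, hΔ.map_ηm_pow, map_pow, hΔ.map_dl,
    Finset.sum_mul_sum, ← Finset.sum_product', Finset.sum_mul]
  refine Finset.sum_congr rfl fun ⟨⟨i, i'⟩, j, j'⟩ _ => ?_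
  have reorder : ηp p ^ i * dl p ^ i' * (ηm p ^ j * dl p ^ ((p - 1) * j')) * dl p ^ k =
      ((q p ^ 2)⁻¹ ^ i') ^ j • monom p i j (i' + (p - 1) * j' + k) := by
    calc _ = ηp p ^ i * (dl p ^ i' * ηm p ^ j) * (dl p ^ ((p - 1) * j') * dl p ^ k) := by
          simp only [mul_assoc]
      _ = _ := by
          rw [((qCommute_dl_ηm p).pow_left i').pow_right j]
          simp only [monom, mul_smul_comm, smul_mul_assoc, pow_add, mul_assoc]
  simp only [smul_mul_assoc, mul_smul_comm, smul_smul, Algebra.TensorProduct.tmul_pow,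
    Algebra.TensorProduct.tmul_mul_tmul, reorder, ← TensorProduct.smul_tmul', coproductCoeff, monom]
  rw [mul_comm (gaussBinom _ m _)]

theorem isRightInvariant (hΔ : IsCoproduct Δ) (hI : IsTopCoefficient c I) :
    IsRightInvariant Δ I := by
  suffices (TensorProduct.rid ℂ (A p)).toLinearMap ∘ₗ
      TensorProduct.map LinearMap.id I ∘ₗ Δ.toLinearMap = I.smulRight 1 from
    LinearMap.congr_fun this
  refine linearMap_ext_monom fun n m k hn hm hk => ?_
  simp only [LinearMap.comp_apply, AlgHom.toLinearMap_apply, hΔ.map_monom, map_sum, map_smul,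
    TensorProduct.map_tmul, LinearMap.id_apply, LinearEquiv.coe_coe, TensorProduct.rid_tmul,
    LinearMap.smulRight_apply]
  rw [Finset.sum_eq_single ((0, n), (0, m))]
  · by_cases htop : n = p - 1 ∧ m = p - 1 ∧ k = 0
    · obtain ⟨rfl, rfl, rfl⟩ := htop
      have exponent : p - 1 + (p - 1) * (p - 1) = p * (p - 1) := by
        rw [← one_add_mul, Nat.add_sub_cancel' (Nat.one_le_of_lt hn)]
      simp [coproductCoeff, monom, exponent, pow_mul, dl_pow_self]
    · simp [hI n m k hn hm hk, htop]
  · rintro ⟨⟨i, i'⟩, j, j'⟩ ht hne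
    simp only [Finset.mem_product, mem_antidiagonal, ne_eq, Prod.mk.injEq] at ht hne
    have leg_eq_zero : I (monom p i' j' k) = 0 := hI.apply_monom_eq_zero (by omega) k
    rw [leg_eq_zero, zero_smul, smul_zero]
  · simp

theorem isLeftInvariant (hΔ : IsCoproduct Δ) (hI : IsTopCoefficient c I) :
    IsLeftInvariant Δ I := by
  suffices (TensorProduct.lid ℂ (A p)).toLinearMap ∘ₗ
      TensorProduct.map I LinearMap.id ∘ₗ Δ.toLinearMap = I.smulRight 1 from
    LinearMap.congr_fun this
  refine linearMap_ext_monom fun n m k hn hm hk => ?_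
  simp only [LinearMap.comp_apply, AlgHom.toLinearMap_apply, hΔ.map_monom, map_sum, map_smul,
    TensorProduct.map_tmul, LinearMap.id_apply, LinearEquiv.coe_coe, TensorProduct.lid_tmul,
    LinearMap.smulRight_apply]
  rw [Finset.sum_eq_single ((n, 0), (m, 0))]
  · by_cases htop : n = p - 1 ∧ m = p - 1 ∧ k = 0
    · obtain ⟨rfl, rfl, rfl⟩ := htop
      simp [coproductCoeff, monom]
    · simp [hI n m k hn hm hk, htop]
  · rintro ⟨⟨i, i'⟩, j, j'⟩ ht hne
    simp only [Finset.mem_product, mem_antidiagonal, ne_eq, Prod.mk.injEq] at ht hne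
    have leg_eq_zero : I (monom p i j (i' + (p - 1) * j' + k)) = 0 :=
      hI.apply_monom_eq_zero (by omega) _
    rw [leg_eq_zero, zero_smul, smul_zero]
  · simp

end IsCoproduct

end InvariantFunctional

section Integration

open MeasureTheory

variable {E : Type*} [NormedAddCommGroup E] [NormedSpace ℝ E] [FiniteDimensional ℝ E]
  [MeasurableSpace E] [BorelSpace E] {μ : Measure E} [μ.IsAddHaarMeasure]

theorem integral_fderiv_apply_eq_zero {F : Type*} [NormedAddCommGroup F] [NormedSpace ℝ F]
    {g : E → F} {v : E} (hg : Differentiable ℝ g) (hint : Integrable g μ)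
    (hint' : Integrable (fun u => fderiv ℝ g u v) μ) : ∫ u, fderiv ℝ g u v ∂μ = 0 := by
  simpa using integral_smul_fderiv_eq_neg_fderiv_smul_of_integrable (𝕜 := ℝ) (μ := μ)
    (f := fun _ => (1 : ℝ)) (g := g) (v := v) (by simp) (by simpa using hint')
    (by simpa using hint) (fun _ _ => differentiableAt_const _) fun _ _ => hg _

variable {𝕜 V : Type*} [RCLike 𝕜]

/-- The combination `f(u) b₀ + ∂₁f(u) b₁ + ∂₂f(u) b₂ + ∂₁∂₂f(u) b₁₂`, where `∂₁` and `∂₂` are the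
derivatives along `e₁` and `e₂`. For `b₀ = 1`, `b₁ = B₊`, `b₂ = B₋` and `b₁₂ = B₊ B₋` this is the
second factor of `G_{a,f}`, at `u = z + w`. -/
def jetCombination [AddCommMonoid V] [Module 𝕜 V] (f : E → 𝕜) (e₁ e₂ : E) (b₀ b₁ b₂ b₁₂ : V)
    (u : E) : V :=
  f u • b₀ + fderiv ℝ f u e₁ • b₁ + fderiv ℝ f u e₂ • b₂ +
    fderiv ℝ (fun u => fderiv ℝ f u e₂) u e₁ • b₁₂

theorem integral_linearMap_jetCombination [AddCommMonoid V] [Module 𝕜 V] (L : V →ₗ[𝕜] 𝕜)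
    {f : E → 𝕜} (hf : ContDiff ℝ 2 f) (hsupp : HasCompactSupport f) (e₁ e₂ : E)
    (b₀ b₁ b₂ b₁₂ : V) :
    ∫ u, L (jetCombination f e₁ e₂ b₀ b₁ b₂ b₁₂ u) ∂μ = (∫ u, f u ∂μ) * L b₀ := by
  have integrable_of_contDiff {g : E → 𝕜} (hg : ContDiff ℝ 1 g) (hgs : HasCompactSupport g) :
      Integrable g μ := hg.continuous.integrable_of_hasCompactSupport hgs
  have integrable_fderiv {g : E → 𝕜} (hg : ContDiff ℝ 1 g) (hgs : HasCompactSupport g) (v : E) :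
      Integrable (fun u => fderiv ℝ g u v) μ :=
    ((hg.continuous_fderiv one_ne_zero).clm_apply continuous_const).integrable_of_hasCompactSupport
      (hgs.fderiv_apply ℝ v)
  have integral_fderiv {g : E → 𝕜} (hg : ContDiff ℝ 1 g) (hgs : HasCompactSupport g) (v : E) :
      ∫ u, fderiv ℝ g u v ∂μ = 0 :=
    integral_fderiv_apply_eq_zero (hg.differentiable one_ne_zero) (integrable_of_contDiff hg hgs)
      (integrable_fderiv hg hgs v)
  have hf₁ : ContDiff ℝ 1 f := hf.of_le one_le_two
  have hf₂ : ContDiff ℝ 1 fun u => fderiv ℝ f u e₂ :=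
    (hf.fderiv_right (m := 1) (by norm_num)).clm_apply contDiff_const
  have hsupp₂ : HasCompactSupport fun u => fderiv ℝ f u e₂ := hsupp.fderiv_apply ℝ e₂
  have h₀ := (integrable_of_contDiff hf₁ hsupp).mul_const (L b₀)
  have h₁ := (integrable_fderiv hf₁ hsupp e₁).mul_const (L b₁)
  have h₂ := (integrable_fderiv hf₁ hsupp e₂).mul_const (L b₂)
  have h₁₂ := (integrable_fderiv hf₂ hsupp₂ e₁).mul_const (L b₁₂)
  simp only [jetCombination, map_add, map_smul, smul_eq_mul]
  rw [integral_add, integral_add, integral_add]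
  · simp only [integral_mul_const, integral_fderiv hf₁ hsupp, integral_fderiv hf₂ hsupp₂, zero_mul,
      add_zero]
  exacts [h₀, h₁, h₀.add h₁, h₂, (h₀.add h₁).add h₂, h₁₂]

variable {H : Type*} [Semiring H] [Algebra 𝕜 H] {Δ : H → H ⊗[𝕜] H} {I : H →ₗ[𝕜] 𝕜}

theorem IsRightInvariant.integral_eq (hI : IsRightInvariant Δ I) {f : E → 𝕜}
    (hf : ContDiff ℝ 2 f) (hsupp : HasCompactSupport f) (e₁ e₂ : E) (b₁ b₂ b₁₂ : H ⊗[𝕜] H) (a : H)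
    (φ : H →ₗ[𝕜] 𝕜) (z : E) :
    ∫ w, φ (TensorProduct.rid 𝕜 H (TensorProduct.map LinearMap.id I
      (Δ a * jetCombination f e₁ e₂ 1 b₁ b₂ b₁₂ (z + w)))) ∂μ =
        I a * (∫ u, f u ∂μ) * φ 1 := by
  let L : H ⊗[𝕜] H →ₗ[𝕜] 𝕜 := φ ∘ₗ (TensorProduct.rid 𝕜 H).toLinearMap ∘ₗ
    TensorProduct.map LinearMap.id I ∘ₗ LinearMap.mulLeft 𝕜 (Δ a)
  have L_one : L 1 = I a * φ 1 := by simp [L, hI a]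
  calc ∫ w, L (jetCombination f e₁ e₂ 1 b₁ b₂ b₁₂ (z + w)) ∂μ
      = ∫ u, L (jetCombination f e₁ e₂ 1 b₁ b₂ b₁₂ u) ∂μ :=
        integral_add_left_eq_self (fun u => L (jetCombination f e₁ e₂ 1 b₁ b₂ b₁₂ u)) z
    _ = (∫ u, f u ∂μ) * L 1 := integral_linearMap_jetCombination L hf hsupp e₁ e₂ 1 b₁ b₂ b₁₂
    _ = I a * (∫ u, f u ∂μ) * φ 1 := by rw [L_one]; ring

theorem IsLeftInvariant.integral_eq (hI : IsLeftInvariant Δ I) {f : E → 𝕜}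
    (hf : ContDiff ℝ 2 f) (hsupp : HasCompactSupport f) (e₁ e₂ : E) (b₁ b₂ b₁₂ : H ⊗[𝕜] H) (a : H)
    (φ : H →ₗ[𝕜] 𝕜) (w : E) :
    ∫ z, φ (TensorProduct.lid 𝕜 H (TensorProduct.map I LinearMap.id
      (Δ a * jetCombination f e₁ e₂ 1 b₁ b₂ b₁₂ (z + w)))) ∂μ =
        I a * (∫ u, f u ∂μ) * φ 1 := by
  let L : H ⊗[𝕜] H →ₗ[𝕜] 𝕜 := φ ∘ₗ (TensorProduct.lid 𝕜 H).toLinearMap ∘ₗ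
    TensorProduct.map I LinearMap.id ∘ₗ LinearMap.mulLeft 𝕜 (Δ a)
  have L_one : L 1 = I a * φ 1 := by simp [L, hI a]
  calc ∫ z, L (jetCombination f e₁ e₂ 1 b₁ b₂ b₁₂ (z + w)) ∂μ
      = ∫ u, L (jetCombination f e₁ e₂ 1 b₁ b₂ b₁₂ u) ∂μ :=
        integral_add_right_eq_self (fun u => L (jetCombination f e₁ e₂ 1 b₁ b₂ b₁₂ u)) w
    _ = (∫ u, f u ∂μ) * L 1 := integral_linearMap_jetCombination L hf hsupp e₁ e₂ 1 b₁ b₂ b₁₂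
    _ = I a * (∫ u, f u ∂μ) * φ 1 := by rw [L_one]; ring

/-- In `Bplus` and `Bminus` the precedence of `⊗ₜ` makes the summands `(x ⊗ₜ y) ^ n` rather than
`x ⊗ₜ (y ^ n)`. Since `b₁`, `b₂` and `b₁₂` are arbitrary here, both readings are covered. -/
theorem statement8_general {p : ℕ} {Δ : A p →ₐ[ℂ] A p ⊗[ℂ] A p} (hΔ : IsCoproduct Δ)
    {I : A p →ₗ[ℂ] ℂ} {c : ℂ} (hI : IsTopCoefficient c I) (a : A p) {f : E → ℂ}
    (hf : ContDiff ℝ 2 f) (hsupp : HasCompactSupport f) (e₁ e₂ : E)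
    (b₁ b₂ b₁₂ : A p ⊗[ℂ] A p) :
    (∀ z, ∀ φ : A p →ₗ[ℂ] ℂ,
      ∫ w, φ (TensorProduct.rid ℂ (A p) (TensorProduct.map LinearMap.id I
        (Δ a * jetCombination f e₁ e₂ 1 b₁ b₂ b₁₂ (z + w)))) ∂μ =
          I a * (∫ u, f u ∂μ) * φ 1) ∧
    (∀ w, ∀ φ : A p →ₗ[ℂ] ℂ,
      ∫ z, φ (TensorProduct.lid ℂ (A p) (TensorProduct.map I LinearMap.id
        (Δ a * jetCombination f e₁ e₂ 1 b₁ b₂ b₁₂ (z + w)))) ∂μ =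
          I a * (∫ u, f u ∂μ) * φ 1) :=
  ⟨fun z φ => (hΔ.isRightInvariant hI).integral_eq hf hsupp e₁ e₂ b₁ b₂ b₁₂ a φ z,
    fun w φ => (hΔ.isLeftInvariant hI).integral_eq hf hsupp e₁ e₂ b₁ b₂ b₁₂ a φ w⟩

end Integration

/-- `I_E(a⊗f) = I(a)·∫f` is a two-sided invariant integral on the quantum Poincaré group
`E_q(1,1) = E(1,1|p) ⋉ ℝ²` at roots of unity: integrating over the second (resp. first)
leg of the coproduct `G_{a,f}` of `a⊗f` yields `I(a)·(∫f)·1_A`.  (The `A`-valued identity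
is expressed weakly, tested against an arbitrary linear functional `φ` on `A`.) -/
theorem statement8 (p : ℕ) (hp : Odd p) (hp3 : 3 ≤ p)
    (Δ : A p →ₐ[ℂ] (A p ⊗[ℂ] A p))
    (hΔ₁ : Δ (ηp p) = ηp p ⊗ₜ[ℂ] 1 + dl p ⊗ₜ[ℂ] ηp p)
    (hΔ₂ : Δ (ηm p) = ηm p ⊗ₜ[ℂ] 1 + (dl p ^ (p - 1)) ⊗ₜ[ℂ] ηm p)
    (hΔ₃ : Δ (dl p) = dl p ⊗ₜ[ℂ] dl p)
    (I : A p →ₗ[ℂ] ℂ)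
    (hI : ∀ n m k : ℕ, n < p → m < p → k < p →
      I (ηp p ^ n * ηm p ^ m * dl p ^ k) =
        if n = p - 1 ∧ m = p - 1 ∧ k = 0 then (q p)⁻¹ else 0)
    (a : A p) (f : ℝ × ℝ → ℂ)
    (hf : ContDiff ℝ (⊤ : ℕ∞) f) (hsupp : HasCompactSupport f) :
    -- right invariance: ∫ (id ⊗ I)(G_{a,f}(z,·)) = I(a)·(∫f)·1_A for every z
    (∀ z : ℝ × ℝ, ∀ φ : A p →ₗ[ℂ] ℂ,
      (∫ w : ℝ × ℝ,
        φ ((TensorProduct.rid ℂ (A p))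
          ((TensorProduct.map LinearMap.id I)
            (Δ a *
              (f (z + w) • 1 +
               (fderiv ℝ f (z + w) (1, 0)) • Bplus p +
               (fderiv ℝ f (z + w) (0, 1)) • Bminus p +
               (fderiv ℝ (fun u => fderiv ℝ f u (0, 1)) (z + w) (1, 0)) •
                 (Bplus p * Bminus p)))))) =
        I a * (∫ u : ℝ × ℝ, f u) * φ 1) ∧
    -- left invariance: ∫ (I ⊗ id)(G_{a,f}(·,w)) = I(a)·(∫f)·1_A for every w
    (∀ w : ℝ × ℝ, ∀ φ : A p →ₗ[ℂ] ℂ,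
      (∫ z : ℝ × ℝ,
        φ ((TensorProduct.lid ℂ (A p))
          ((TensorProduct.map I LinearMap.id)
            (Δ a *
              (f (z + w) • 1 +
               (fderiv ℝ f (z + w) (1, 0)) • Bplus p +
               (fderiv ℝ f (z + w) (0, 1)) • Bminus p +
               (fderiv ℝ (fun u => fderiv ℝ f u (0, 1)) (z + w) (1, 0)) •
                 (Bplus p * Bminus p)))))) =
        I a * (∫ u : ℝ × ℝ, f u) * φ 1) := by
  exact statement8_general ⟨hΔ₁, hΔ₂, hΔ₃⟩ hI a (hf.of_le (by norm_cast)) hsupp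
    (1, 0) (0, 1) (Bplus p) (Bminus p) (Bplus p * Bminus p)
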